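/- arXiv:1907.01379 — 5 statements merged into one kernel-verified Lean document; each statement's English description precedes it below -/
import Mathlib

section
/- Let D be an n×n dissimilarity matrix (a symmetric real matrix with zero diagonal and nonnegative entries). Define A = (a_ij) by a_ij = -(1/2) d_ij^2, and let B be the double mean-centering of A, i.e. b_rs = a_rs - (1/n)Σ_s a_rs - (1/n)Σ_r a_rs + (1/n^2)Σ_{r,s} a_rs (equivalently B = H A H with H = I - (1/n) J, where J is the all-ones matrix). Then D is Euclidean — i.e. there exist points x_1, …, x_n in some Euclidean space ℝ^N such that ‖x_r - x_s‖ = d_rs for all r, s — if and only if B is a positive semi-definite matrix. -/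
open Matrix

/-!
The centering matrix `H` annihilates the all-ones vector and fixes every vector whose entries sum
to zero. Since `-‖x r - x s‖ ^ 2 / 2 = ⟪x r, x s⟫ - ‖x r‖ ^ 2 / 2 - ‖x s‖ ^ 2 / 2` and the last two
terms depend on `r` or on `s` alone, the first property shows that `H A H = H G H` for the Gram
matrix `G` of the points, so `H A H` is positive semidefinite. Conversely, a positive semidefinite
`H A H` is the Gram matrix of some points, and the second property shows that the quadratic forms of
`H A H` and `A` agree at `e r - e s`, where they are `‖x r - x s‖ ^ 2` and `d r s ^ 2`.
-/

section Centering

variable {ι K : Type*} [Fintype ι] [DecidableEq ι] [DivisionRing K]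

variable (ι K) in
/-- The centering matrix `1 - n⁻¹ J`, where `n` is the number of indices and `J` is the all-ones
matrix: as a linear map, it subtracts from a vector the mean of its entries.
If `n = 0` in `K`, then `n⁻¹ = 0` and this is the identity matrix. -/
def centeringMatrix : Matrix ι ι K :=
  1 - (Fintype.card ι : K)⁻¹ • Matrix.of fun _ _ => 1

/-- The double mean-centering of a square matrix, which subtracts the row means and the column means
and adds back the overall mean, encoded as multiplication by the centering matrix on both sides. -/
def doubleCentering (A : Matrix ι ι K) : Matrix ι ι K :=
  centeringMatrix ι K * A * centeringMatrix ι K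

theorem centeringMatrix_mulVec_of_sum_eq_zero {v : ι → K} (hv : ∑ i, v i = 0) :
    centeringMatrix ι K *ᵥ v = v := by
  ext i
  simp [centeringMatrix, mulVec, dotProduct, one_apply, sub_mul, ← Finset.mul_sum, hv]

theorem vecMul_centeringMatrix_of_sum_eq_zero {v : ι → K} (hv : ∑ i, v i = 0) :
    v ᵥ* centeringMatrix ι K = v := by
  ext i
  simp [centeringMatrix, vecMul, dotProduct, one_apply, mul_sub, ← Finset.sum_mul, hv]

theorem dotProduct_doubleCentering_mulVec (A : Matrix ι ι K) {v w : ι → K}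
    (hv : ∑ i, v i = 0) (hw : ∑ i, w i = 0) :
    v ⬝ᵥ doubleCentering A *ᵥ w = v ⬝ᵥ A *ᵥ w := by
  rw [doubleCentering, ← mulVec_mulVec, centeringMatrix_mulVec_of_sum_eq_zero hw, ← mulVec_mulVec,
    dotProduct_mulVec, vecMul_centeringMatrix_of_sum_eq_zero hv]

theorem single_sub_single_dotProduct_mulVec {R : Type*} [Ring R] (A : Matrix ι ι R) (r s : ι) :
    (Pi.single r 1 - Pi.single s 1) ⬝ᵥ A *ᵥ (Pi.single r 1 - Pi.single s 1) =
      A r r - A r s - A s r + A s s := by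
  simp only [mulVec_sub, sub_dotProduct, dotProduct_sub, mulVec_single_one,
    single_one_dotProduct, col_apply]
  abel

theorem doubleCentering_apply_polarization (A : Matrix ι ι K) (r s : ι) :
    doubleCentering A r r - doubleCentering A r s - doubleCentering A s r +
      doubleCentering A s s = A r r - A r s - A s r + A s s := by
  have hsum : ∑ i, (Pi.single r 1 - Pi.single s 1 : ι → K) i = 0 := by simp
  simpa only [single_sub_single_dotProduct_mulVec] using
    dotProduct_doubleCentering_mulVec A hsum hsum

section CharZero

variable [CharZero K]

theorem centeringMatrix_mulVec_one : centeringMatrix ι K *ᵥ 1 = 0 := by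
  ext i
  have : Nonempty ι := ⟨i⟩
  simp [centeringMatrix, mulVec, dotProduct, one_apply]

theorem one_vecMul_centeringMatrix : 1 ᵥ* centeringMatrix ι K = 0 := by
  ext i
  have : Nonempty ι := ⟨i⟩
  simp [centeringMatrix, vecMul, dotProduct, one_apply]

theorem doubleCentering_add_vecMulVec_one (A : Matrix ι ι K) (u v : ι → K) :
    doubleCentering (A + vecMulVec u 1 + vecMulVec 1 v) = doubleCentering A := by
  simp only [doubleCentering, mul_add, add_mul, mul_vecMulVec, vecMulVec_mul,
    centeringMatrix_mulVec_one, one_vecMul_centeringMatrix, vecMulVec_zero, zero_vecMulVec,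
    add_zero]

end CharZero

theorem isHermitian_centeringMatrix [StarRing K] : (centeringMatrix ι K).IsHermitian := by
  ext i j
  simp [centeringMatrix, one_apply, eq_comm, apply_ite star]

theorem posSemidef_doubleCentering [PartialOrder K] [StarRing K] {A : Matrix ι ι K}
    (hA : A.PosSemidef) : (doubleCentering A).PosSemidef := by
  simpa only [doubleCentering, isHermitian_centeringMatrix.eq] using
    hA.mul_mul_conjTranspose_same (centeringMatrix ι K)

end Centering

open scoped ComplexOrder in
theorem exists_gram_eq_of_posSemidef {ι 𝕜 : Type*} [Finite ι] [RCLike 𝕜] {A : Matrix ι ι 𝕜}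
    (hA : A.PosSemidef) : ∃ (N : ℕ) (x : ι → EuclideanSpace 𝕜 (Fin N)), gram 𝕜 x = A := by
  obtain ⟨N, v, rfl⟩ := posSemidef_iff_eq_sum_vecMulVec.mp hA
  refine ⟨N, fun r => WithLp.toLp 2 fun k => star (v k r), ?_⟩
  ext r s
  simp [Matrix.sum_apply, vecMulVec_apply, PiLp.inner_apply, mul_comm]

section Gram

variable {ι E : Type*} [SeminormedAddCommGroup E] [InnerProductSpace ℝ E]

theorem norm_sub_sq_eq_gram (x : ι → E) (r s : ι) :
    ‖x r - x s‖ ^ 2 = gram ℝ x r r - gram ℝ x r s - gram ℝ x s r + gram ℝ x s s := by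
  rw [← real_inner_self_eq_norm_sq, inner_sub_sub_self]
  rfl

theorem doubleCentering_neg_half_norm_sub_sq [Fintype ι] [DecidableEq ι] (x : ι → E) :
    doubleCentering (.of fun r s => -(1 / 2) * ‖x r - x s‖ ^ 2) =
      doubleCentering (gram ℝ x) := by
  let q : ι → ℝ := fun r => -(1 / 2) * ‖x r‖ ^ 2
  rw [← doubleCentering_add_vecMulVec_one (gram ℝ x) q q]
  congr 1
  ext r s
  simp only [of_apply, Matrix.add_apply, gram_apply, vecMulVec_apply, Pi.one_apply, q,
    norm_sub_sq_real]
  ring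

end Gram

theorem dissimilarity_euclidean_iff_posSemidef_general {ι : Type*} [Fintype ι] [DecidableEq ι]
    {D : Matrix ι ι ℝ} (hsymm : D.IsSymm) (hdiag : ∀ i, D i i = 0) (hnonneg : ∀ i j, 0 ≤ D i j) :
    (∃ (N : ℕ) (x : ι → EuclideanSpace ℝ (Fin N)), ∀ r s, ‖x r - x s‖ = D r s) ↔
      (doubleCentering (.of fun r s => -(1 / 2) * D r s ^ 2)).PosSemidef := by
  constructor
  · rintro ⟨N, x, hx⟩
    simp only [← hx, doubleCentering_neg_half_norm_sub_sq]
    exact posSemidef_doubleCentering (posSemidef_gram ℝ x)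
  · intro hB
    obtain ⟨N, x, hx⟩ := exists_gram_eq_of_posSemidef hB
    refine ⟨N, x, fun r s => (sq_eq_sq₀ (norm_nonneg _) (hnonneg r s)).mp ?_⟩
    rw [norm_sub_sq_eq_gram, hx, doubleCentering_apply_polarization]
    simp only [of_apply, hdiag, hsymm.apply r s]
    ring

/-- **Theorem (Euclidean criterion for dissimilarity matrices).**
A dissimilarity matrix `D` (symmetric, zero diagonal, nonnegative entries) is
Euclidean, i.e. realizable as the matrix of pairwise Euclidean distances of
`n` points in some `ℝ^N`, if and only if its double mean-centering
`B = H * A * H` (where `A = -(1/2) D∘D` and `H = 1 - (1/n) J`) is positive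
semi-definite. -/
theorem dissimilarity_euclidean_iff_posSemidef
    (n : ℕ) (hn : 0 < n) (D : Matrix (Fin n) (Fin n) ℝ)
    (hsymm : D.IsSymm) (hdiag : ∀ i, D i i = 0) (hnonneg : ∀ i j, 0 ≤ D i j)
    (A H B : Matrix (Fin n) (Fin n) ℝ)
    (hA : ∀ i j, A i j = -(1/2) * (D i j)^2)
    (hH : H = 1 - (n : ℝ)⁻¹ • Matrix.of (fun _ _ => (1 : ℝ)))
    (hB : B = H * A * H) :
    (∃ (N : ℕ) (x : Fin n → EuclideanSpace ℝ (Fin N)),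
      ∀ r s, ‖x r - x s‖ = D r s) ↔ B.PosSemidef := by
  obtain rfl : A = .of fun r s => -(1 / 2) * D r s ^ 2 := by
    ext r s
    exact hA r s
  simpa only [hB, hH, doubleCentering, centeringMatrix, Fintype.card_fin] using
    dissimilarity_euclidean_iff_posSemidef_general hsymm hdiag hnonneg
end

section
/- Let B be a real symmetric n×n matrix with eigenvalues λ_1 ≥ λ_2 ≥ … ≥ λ_n (listed with multiplicity), and fix m ≤ n. Then the minimum of the strain ‖B - B̂‖_F^2 = Σ_{i,j} (b_ij - b̂_ij)^2, taken over all real positive semi-definite n×n matrices B̂ of rank at most m, equals Σ_{i=1}^{m} (min(λ_i, 0))^2 + Σ_{i=m+1}^{n} λ_i^2; in particular the minimum is achieved by the classical MDS solution B̂ = Σ_{i ≤ m, λ_i > 0} λ_i v_i v_i^T, where v_i are corresponding orthonormal eigenvectors of B. -/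
open Matrix Finset

/-!
Diagonalise `B = V diag(l) Vᴴ` and a competitor `C = U diag(u) Uᴴ` with `u ≥ 0`. By unitary
invariance of the Frobenius norm the strain is `∑ i k, |W i k|² (l i - u k)²` with `W = Vᴴ U`, and
the weights `|W i k|²` form a doubly stochastic matrix. Since `(l - u)² ≥ l² - (l⁺)²` for `u ≥ 0`,
and `(l - u)² = l²` when `u = 0`, the strain is at least `∑ i, (l i)² - ∑ i, s i * ((l i)⁺)²`, where
`s i ∈ [0, 1]` is the weight that row `i` puts on the nonzero `u k`. These row weights add up to
`rank C`, so the subtracted sum is largest when all of the weight lies on the leading eigenvalues.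
-/

section Knapsack

lemma exists_nonneg_threshold {R ι : Type*} [Zero R] [LinearOrder R] [Finite ι] {T : Set ι}
    {p : ι → R} (hp : ∀ i, 0 ≤ p i) (hT : ∀ i ∈ T, ∀ j ∉ T, p j ≤ p i) :
    ∃ c, 0 ≤ c ∧ (∀ i ∈ T, c ≤ p i) ∧ ∀ j ∉ T, p j ≤ c := by
  obtain hempty | hne := Tᶜ.eq_empty_or_nonempty
  · exact ⟨0, le_rfl, fun i _ ↦ hp i, fun j hj ↦ (hempty.le hj).elim⟩
  · obtain ⟨k, hk, hmax⟩ := Set.exists_max_image Tᶜ p Tᶜ.toFinite hne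
    exact ⟨p k, hp k, fun i hi ↦ hT i hi k hk, hmax⟩

variable {R ι : Type*} [CommRing R] [LinearOrder R] [IsStrictOrderedRing R] [Fintype ι]

lemma sum_mul_le_sum_of_sum_le_card {T : Finset ι} {p s : ι → R} (hp : ∀ i, 0 ≤ p i)
    (hT : ∀ i ∈ T, ∀ j ∉ T, p j ≤ p i) (hs₀ : ∀ i, 0 ≤ s i) (hs₁ : ∀ i, s i ≤ 1)
    (hs : ∑ i, s i ≤ #T) :
    ∑ i, s i * p i ≤ ∑ i ∈ T, p i := by
  obtain ⟨c, hc, hcT, hTc⟩ := exists_nonneg_threshold (T := (T : Set ι)) hp hT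
  classical
  have exchange (i : ι) : s i * p i ≤ (if i ∈ T then p i - c else 0) + c * s i := by
    split_ifs with hi
    · nlinarith [hcT i hi, hs₁ i]
    · nlinarith [hTc i hi, hs₀ i]
  calc ∑ i, s i * p i
      ≤ ∑ i, ((if i ∈ T then p i - c else 0) + c * s i) := sum_le_sum fun i _ ↦ exchange i
    _ = ∑ i ∈ T, p i - c * #T + c * ∑ i, s i := by
        rw [sum_add_distrib, sum_ite_mem, univ_inter, sum_sub_distrib, sum_const, nsmul_eq_mul,
          mul_comm c, mul_sum]
    _ ≤ ∑ i ∈ T, p i := by linarith [mul_le_mul_of_nonneg_left hs hc]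

lemma sum_sum_mul_le_sum_of_mem_doublyStochastic [DecidableEq ι] {D : Matrix ι ι R}
    (hD : D ∈ doublyStochastic R ι) {S T : Finset ι} (hST : #S ≤ #T) {p : ι → R}
    (hp : ∀ i, 0 ≤ p i) (hT : ∀ i ∈ T, ∀ j ∉ T, p j ≤ p i) :
    ∑ i, (∑ k ∈ S, D i k) * p i ≤ ∑ i ∈ T, p i := by
  refine sum_mul_le_sum_of_sum_le_card hp hT
    (fun i ↦ sum_nonneg fun k _ ↦ nonneg_of_mem_doublyStochastic hD) (fun i ↦ ?_) ?_
  · rw [← sum_row_of_mem_doublyStochastic hD i]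
    exact sum_le_univ_sum_of_nonneg fun k ↦ nonneg_of_mem_doublyStochastic hD
  · calc ∑ i, ∑ k ∈ S, D i k
        = ∑ k ∈ S, ∑ i, D i k := sum_comm
      _ = #S := by simp only [sum_col_of_mem_doublyStochastic hD, sum_const, nsmul_one]
      _ ≤ #T := mod_cast hST

end Knapsack

section Truncation

variable {ι : Type*} [DecidableEq ι]

/-- The spectrum of the classical MDS solution: positive parts of the retained eigenvalues `l i`,
`i ∈ T`, and `0` in place of all others. -/
def truncatedSpectrum (T : Finset ι) (l : ι → ℝ) (i : ι) : ℝ :=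
  if i ∈ T then (l i)⁺ else 0

lemma truncatedSpectrum_nonneg (T : Finset ι) (l : ι → ℝ) (i : ι) :
    0 ≤ truncatedSpectrum T l i := by
  unfold truncatedSpectrum
  split_ifs
  exacts [posPart_nonneg _, le_rfl]

lemma sub_truncatedSpectrum_sq (T : Finset ι) (l : ι → ℝ) (i : ι) :
    (l i - truncatedSpectrum T l i) ^ 2 = if i ∈ T then min (l i) 0 ^ 2 else l i ^ 2 := by
  unfold truncatedSpectrum
  split_ifs
  · rw [inf_eq_sub_posPart_sub, sub_zero]
  · rw [sub_zero]

variable [Fintype ι]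

lemma card_truncatedSpectrum_ne_zero_le (T : Finset ι) (l : ι → ℝ) :
    #{i | truncatedSpectrum T l i ≠ 0} ≤ #T := by
  refine card_le_card fun i hi ↦ ?_
  by_contra hiT
  simp [truncatedSpectrum, hiT] at hi

lemma sub_posPart_sq (x : ℝ) : (x - x⁺) ^ 2 = x ^ 2 - x⁺ ^ 2 := by
  obtain hx | hx := le_total x 0 <;> simp [hx]

lemma sq_sub_posPart_sq_le_sub_sq (x : ℝ) {u : ℝ} (hu : 0 ≤ u) :
    x ^ 2 - (if u ≠ 0 then x⁺ ^ 2 else 0) ≤ (x - u) ^ 2 := by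
  split_ifs with hu₀
  · obtain hx | hx := le_total x 0
    · rw [posPart_of_nonpos hx]
      nlinarith
    · rw [posPart_of_nonneg hx]
      nlinarith [sq_nonneg (x - u)]
  · simp [not_not.1 hu₀]

lemma sum_sub_truncatedSpectrum_sq (T : Finset ι) (l : ι → ℝ) :
    ∑ i, (l i - truncatedSpectrum T l i) ^ 2 = ∑ i, l i ^ 2 - ∑ i ∈ T, (l i)⁺ ^ 2 := by
  rw [← Fintype.sum_ite_mem T, ← sum_sub_distrib]
  refine sum_congr rfl fun i _ ↦ ?_
  unfold truncatedSpectrum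
  split_ifs
  · exact sub_posPart_sq (l i)
  · simp

lemma sum_sub_truncatedSpectrum_sq_le_of_mem_doublyStochastic {D : Matrix ι ι ℝ}
    (hD : D ∈ doublyStochastic ℝ ι) {T : Finset ι} {l u : ι → ℝ}
    (hT : ∀ i ∈ T, ∀ j ∉ T, l j ≤ l i) (hu : ∀ k, 0 ≤ u k) (hcard : #{k | u k ≠ 0} ≤ #T) :
    ∑ i, (l i - truncatedSpectrum T l i) ^ 2 ≤ ∑ i, ∑ k, D i k * (l i - u k) ^ 2 := by
  have knapsack : ∑ i, (∑ k with u k ≠ 0, D i k) * (l i)⁺ ^ 2 ≤ ∑ i ∈ T, (l i)⁺ ^ 2 :=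
    sum_sum_mul_le_sum_of_mem_doublyStochastic hD hcard (fun i ↦ sq_nonneg _)
      fun i hi j hj ↦ pow_le_pow_left₀ (posPart_nonneg _) (posPart_mono (hT i hi j hj)) 2
  have row_sum (i : ι) :
      l i ^ 2 - (∑ k with u k ≠ 0, D i k) * (l i)⁺ ^ 2 =
        ∑ k, D i k * (l i ^ 2 - if u k ≠ 0 then (l i)⁺ ^ 2 else 0) := by
    simp only [mul_sub, sum_sub_distrib, ← sum_mul, sum_row_of_mem_doublyStochastic hD, one_mul,
      mul_ite, mul_zero, ← sum_filter]
  calc ∑ i, (l i - truncatedSpectrum T l i) ^ 2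
      = ∑ i, l i ^ 2 - ∑ i ∈ T, (l i)⁺ ^ 2 := sum_sub_truncatedSpectrum_sq T l
    _ ≤ ∑ i, (l i ^ 2 - (∑ k with u k ≠ 0, D i k) * (l i)⁺ ^ 2) := by
        rw [sum_sub_distrib]
        exact sub_le_sub_left knapsack _
    _ = ∑ i, ∑ k, D i k * (l i ^ 2 - if u k ≠ 0 then (l i)⁺ ^ 2 else 0) :=
        sum_congr rfl fun i _ ↦ row_sum i
    _ ≤ ∑ i, ∑ k, D i k * (l i - u k) ^ 2 :=
        sum_le_sum fun i _ ↦ sum_le_sum fun k _ ↦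
          mul_le_mul_of_nonneg_left (sq_sub_posPart_sq_le_sub_sq (l i) (hu k))
            (nonneg_of_mem_doublyStochastic hD)

end Truncation

section Matrices

open scoped ComplexOrder

variable {𝕜 ι : Type*} [RCLike 𝕜] [Fintype ι]

lemma ofReal_sum_norm_sq_row {κ : Type*} (A : Matrix κ ι 𝕜) (i : κ) :
    ((∑ j, ‖A i j‖ ^ 2 : ℝ) : 𝕜) = (A * Aᴴ) i i := by
  simp [mul_apply, RCLike.mul_conj]

lemma ofReal_sum_norm_sq {κ : Type*} [Fintype κ] (A : Matrix κ ι 𝕜) :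
    ((∑ i, ∑ j, ‖A i j‖ ^ 2 : ℝ) : 𝕜) = (A * Aᴴ).trace := by
  rw [RCLike.ofReal_sum]
  exact sum_congr rfl fun i _ ↦ ofReal_sum_norm_sq_row A i

/-- The strain of a fitted configuration with Gram matrix `C`: the squared Frobenius distance from
`C` to the target `B`. -/
def strain (B C : Matrix ι ι 𝕜) : ℝ := ∑ i, ∑ j, ‖B i j - C i j‖ ^ 2

/-- The classical MDS Gram matrix built from the eigenpairs `(l i, v i)` with `i ∈ T`, of which it
keeps those with positive eigenvalue. -/
noncomputable def classicalMDS (T : Finset ι) (l : ι → ℝ) (v : ι → ι → 𝕜) : Matrix ι ι 𝕜 :=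
  ∑ i ∈ T with 0 < l i, (l i : 𝕜) • vecMulVec (v i) (star (v i))

variable [DecidableEq ι]

lemma sum_norm_sq_row_of_mem_unitaryGroup {U : Matrix ι ι 𝕜} (hU : U ∈ unitaryGroup ι 𝕜) (i : ι) :
    ∑ j, ‖U i j‖ ^ 2 = 1 := by
  have hUU : U * Uᴴ = 1 := mem_unitaryGroup_iff.1 hU
  have h := ofReal_sum_norm_sq_row U i
  rw [hUU, one_apply_eq] at h
  exact_mod_cast h

lemma norm_sq_mem_doublyStochastic {U : Matrix ι ι 𝕜} (hU : U ∈ unitaryGroup ι 𝕜) :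
    of (fun i j ↦ ‖U i j‖ ^ 2) ∈ doublyStochastic ℝ ι := by
  refine mem_doublyStochastic_iff_sum.2
    ⟨fun i j ↦ sq_nonneg _, sum_norm_sq_row_of_mem_unitaryGroup hU, fun j ↦ ?_⟩
  simpa using sum_norm_sq_row_of_mem_unitaryGroup (Unitary.star_mem hU) j

lemma sum_norm_sq_unitary_mul_mul {κ : Type*} [Fintype κ] [DecidableEq κ] {U : Matrix κ κ 𝕜}
    (hU : U ∈ unitaryGroup κ 𝕜) {V : Matrix ι ι 𝕜} (hV : V ∈ unitaryGroup ι 𝕜)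
    (A : Matrix κ ι 𝕜) :
    ∑ i, ∑ j, ‖(U * A * V) i j‖ ^ 2 = ∑ i, ∑ j, ‖A i j‖ ^ 2 := by
  have hUU : Uᴴ * U = 1 := mem_unitaryGroup_iff'.1 hU
  have hVV : V * Vᴴ = 1 := mem_unitaryGroup_iff.1 hV
  apply RCLike.ofReal_injective (K := 𝕜)
  rw [ofReal_sum_norm_sq, ofReal_sum_norm_sq]
  calc (U * A * V * (U * A * V)ᴴ).trace
      = (U * (A * (V * Vᴴ) * Aᴴ * Uᴴ)).trace := by
        simp only [conjTranspose_mul, Matrix.mul_assoc]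
    _ = (A * Aᴴ * (Uᴴ * U)).trace := by
        rw [hVV, Matrix.mul_one, trace_mul_comm, Matrix.mul_assoc (A * Aᴴ)]
    _ = (A * Aᴴ).trace := by rw [hUU, Matrix.mul_one]

/-- The Hermitian matrix `U diag(d) Uᴴ`; for unitary `U` its eigenvectors are the columns of `U`,
with eigenvalues `d`. -/
def conjDiagonal (U : Matrix ι ι 𝕜) (d : ι → ℝ) : Matrix ι ι 𝕜 :=
  U * diagonal (RCLike.ofReal ∘ d) * Uᴴ

lemma conjDiagonal_transpose_of (v : ι → ι → 𝕜) (d : ι → ℝ) :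
    conjDiagonal (of v)ᵀ d = ∑ i, (d i : 𝕜) • vecMulVec (v i) (star (v i)) := by
  ext a b
  rw [conjDiagonal, mul_apply, Matrix.sum_apply]
  refine sum_congr rfl fun i _ ↦ ?_
  simp only [mul_diagonal, transpose_apply, of_apply, conjTranspose_apply, Function.comp_apply,
    Matrix.smul_apply, vecMulVec_apply, Pi.star_apply, smul_eq_mul]
  ring

lemma posSemidef_conjDiagonal (U : Matrix ι ι 𝕜) {d : ι → ℝ} (hd : ∀ i, 0 ≤ d i) :
    (conjDiagonal U d).PosSemidef :=
  (PosSemidef.diagonal fun i ↦ RCLike.ofReal_nonneg.2 (hd i)).mul_mul_conjTranspose_same U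

lemma rank_conjDiagonal_le (U : Matrix ι ι 𝕜) (d : ι → ℝ) :
    (conjDiagonal U d).rank ≤ #{i | d i ≠ 0} :=
  calc (conjDiagonal U d).rank
      ≤ (diagonal (RCLike.ofReal ∘ d : ι → 𝕜)).rank :=
        (rank_mul_le_left _ _).trans (rank_mul_le_right _ _)
    _ = #{i | d i ≠ 0} := by
        simp only [rank_diagonal, Fintype.card_subtype, Function.comp_apply, ne_eq,
          RCLike.ofReal_eq_zero]

lemma conjDiagonal_eigenvalues {C : Matrix ι ι 𝕜} (hC : C.IsHermitian) :
    conjDiagonal (hC.eigenvectorUnitary : Matrix ι ι 𝕜) hC.eigenvalues = C :=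
  (hC.spectral_theorem.trans (Unitary.conjStarAlgAut_apply _ _)).symm

lemma strain_conjDiagonal {V U : Matrix ι ι 𝕜} (hV : V ∈ unitaryGroup ι 𝕜)
    (hU : U ∈ unitaryGroup ι 𝕜) (l u : ι → ℝ) :
    strain (conjDiagonal V l) (conjDiagonal U u) =
      ∑ i, ∑ k, ‖(Vᴴ * U) i k‖ ^ 2 * (l i - u k) ^ 2 := by
  have hVV : Vᴴ * V = 1 := mem_unitaryGroup_iff'.1 hV
  have hUU : Uᴴ * U = 1 := mem_unitaryGroup_iff'.1 hU
  have conj_sub : Vᴴ * (conjDiagonal V l - conjDiagonal U u) * U =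
      diagonal (RCLike.ofReal ∘ l) * (Vᴴ * U) - Vᴴ * U * diagonal (RCLike.ofReal ∘ u) := by
    simp only [conjDiagonal, Matrix.mul_sub, Matrix.sub_mul, Matrix.mul_assoc, hUU,
      Matrix.mul_one]
    simp only [← Matrix.mul_assoc, hVV, Matrix.one_mul]
  have entry (i k : ι) : (Vᴴ * (conjDiagonal V l - conjDiagonal U u) * U) i k =
      (Vᴴ * U) i k * ((l i - u k : ℝ) : 𝕜) := by
    rw [conj_sub, Matrix.sub_apply, diagonal_mul, mul_diagonal]
    push_cast [Function.comp_apply]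
    ring
  calc strain (conjDiagonal V l) (conjDiagonal U u)
      = ∑ i, ∑ k, ‖(Vᴴ * (conjDiagonal V l - conjDiagonal U u) * U) i k‖ ^ 2 :=
        (sum_norm_sq_unitary_mul_mul (Unitary.star_mem hV) hU _).symm
    _ = ∑ i, ∑ k, ‖(Vᴴ * U) i k‖ ^ 2 * (l i - u k) ^ 2 := by
        simp only [entry, norm_mul, mul_pow, RCLike.norm_ofReal, sq_abs]

lemma strain_conjDiagonal_same {V : Matrix ι ι 𝕜} (hV : V ∈ unitaryGroup ι 𝕜) (l u : ι → ℝ) :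
    strain (conjDiagonal V l) (conjDiagonal V u) = ∑ i, (l i - u i) ^ 2 := by
  have hVV : Vᴴ * V = 1 := mem_unitaryGroup_iff'.1 hV
  simp [strain_conjDiagonal hV hV, hVV, one_apply, apply_ite, ite_pow]

theorem isLeast_strain_conjDiagonal {V : Matrix ι ι 𝕜} (hV : V ∈ unitaryGroup ι 𝕜) {l : ι → ℝ}
    {T : Finset ι} (hT : ∀ i ∈ T, ∀ j ∉ T, l j ≤ l i) :
    IsLeast {E | ∃ C : Matrix ι ι 𝕜, C.PosSemidef ∧ C.rank ≤ #T ∧ E = strain (conjDiagonal V l) C}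
      (strain (conjDiagonal V l) (conjDiagonal V (truncatedSpectrum T l))) := by
  constructor
  · exact ⟨_, posSemidef_conjDiagonal V (truncatedSpectrum_nonneg T l),
      (rank_conjDiagonal_le V _).trans (card_truncatedSpectrum_ne_zero_le T l), rfl⟩
  · rintro _ ⟨C, hC, hrank, rfl⟩
    rw [hC.1.rank_eq_card_non_zero_eigs, Fintype.card_subtype] at hrank
    have hU := hC.1.eigenvectorUnitary.2
    rw [← conjDiagonal_eigenvalues hC.1, strain_conjDiagonal_same hV, strain_conjDiagonal hV hU]
    exact sum_sub_truncatedSpectrum_sq_le_of_mem_doublyStochastic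
      (norm_sq_mem_doublyStochastic (mul_mem (Unitary.star_mem hV) hU))
      hT hC.eigenvalues_nonneg hrank

lemma transpose_of_mem_unitaryGroup {v : ι → ι → 𝕜}
    (hv : ∀ i j, star (v i) ⬝ᵥ v j = if i = j then 1 else 0) : (of v)ᵀ ∈ unitaryGroup ι 𝕜 :=
  mem_unitaryGroup_iff'.2 <| Matrix.ext fun i j ↦ (hv i j).trans one_apply.symm

lemma conjDiagonal_transpose_of_eigenvectors {B : Matrix ι ι 𝕜} {l : ι → ℝ} {v : ι → ι → 𝕜}
    (hv : (of v)ᵀ ∈ unitaryGroup ι 𝕜) (hB : ∀ i, B *ᵥ v i = (l i : 𝕜) • v i) :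
    conjDiagonal (of v)ᵀ l = B := by
  have hBv : B * (of v)ᵀ = (of v)ᵀ * diagonal (RCLike.ofReal ∘ l) := by
    ext a i
    rw [mul_diagonal, mul_comm]
    exact congrFun (hB i) a
  have hvv : (of v)ᵀ * ((of v)ᵀ)ᴴ = 1 := mem_unitaryGroup_iff.1 hv
  rw [conjDiagonal, ← hBv, Matrix.mul_assoc, hvv, Matrix.mul_one]

lemma conjDiagonal_truncatedSpectrum (T : Finset ι) (l : ι → ℝ) (v : ι → ι → 𝕜) :
    conjDiagonal (of v)ᵀ (truncatedSpectrum T l) = classicalMDS T l v := by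
  rw [conjDiagonal_transpose_of, classicalMDS, sum_filter, ← Fintype.sum_ite_mem T]
  refine sum_congr rfl fun i _ ↦ ?_
  unfold truncatedSpectrum
  split_ifs with _ hi
  · rw [posPart_of_nonneg hi.le]
  · simp [not_lt.1 hi]
  · simp

theorem classical_mds_minimizes_strain_general {B : Matrix ι ι 𝕜} {l : ι → ℝ} {T : Finset ι}
    (hT : ∀ i ∈ T, ∀ j ∉ T, l j ≤ l i) {v : ι → ι → 𝕜}
    (hv : ∀ i j, star (v i) ⬝ᵥ v j = if i = j then 1 else 0)
    (hB : ∀ i, B *ᵥ v i = (l i : 𝕜) • v i) :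
    IsLeast {E | ∃ C : Matrix ι ι 𝕜, C.PosSemidef ∧ C.rank ≤ #T ∧ E = strain B C}
        (∑ i, if i ∈ T then min (l i) 0 ^ 2 else l i ^ 2) ∧
      strain B (classicalMDS T l v) = ∑ i, if i ∈ T then min (l i) 0 ^ 2 else l i ^ 2 := by
  have hV := transpose_of_mem_unitaryGroup hv
  have hleast := isLeast_strain_conjDiagonal hV hT
  have hvalue := strain_conjDiagonal_same hV l (truncatedSpectrum T l)
  simp only [sub_truncatedSpectrum_sq] at hvalue
  rw [conjDiagonal_transpose_of_eigenvectors hV hB, conjDiagonal_truncatedSpectrum] at hleast hvalue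
  exact ⟨hvalue ▸ hleast, hvalue⟩

end Matrices

/-- **Theorem (strain minimization for classical MDS).**
Let `B` be a real symmetric `n × n` matrix with eigenvalues
`λ 0 ≥ λ 1 ≥ … ≥ λ (n-1)` and corresponding orthonormal eigenvectors `v i`,
and fix `m ≤ n`.  The minimum of the strain `‖B - B̂‖_F² = ∑ᵢⱼ (bᵢⱼ - b̂ᵢⱼ)²`
over all positive semi-definite matrices `B̂` of rank at most `m` is
`∑_{i < m} (min (λ i) 0)² + ∑_{i ≥ m} (λ i)²`, and it is attained by the
classical MDS solution `B̂ = ∑_{i < m, λ i > 0} λ i • v i v iᵀ`. -/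
theorem classical_mds_minimizes_strain
    (n m : ℕ) (hm : m ≤ n) (B : Matrix (Fin n) (Fin n) ℝ) (hB : B.IsSymm)
    (lam : Fin n → ℝ) (hdec : ∀ i j : Fin n, i ≤ j → lam j ≤ lam i)
    (v : Fin n → (Fin n → ℝ))
    (hortho : ∀ i j : Fin n, v i ⬝ᵥ v j = if i = j then (1 : ℝ) else 0)
    (heig : ∀ i : Fin n, B *ᵥ v i = lam i • v i) :
    IsLeast
      {E : ℝ | ∃ C : Matrix (Fin n) (Fin n) ℝ, C.PosSemidef ∧ C.rank ≤ m ∧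
        E = ∑ i : Fin n, ∑ j : Fin n, (B i j - C i j)^2}
      (∑ i : Fin n, if (i : ℕ) < m then (min (lam i) 0)^2 else (lam i)^2) ∧
    (∑ i : Fin n, ∑ j : Fin n,
        (B i j - (∑ i ∈ Finset.univ.filter (fun i : Fin n => (i : ℕ) < m ∧ 0 < lam i),
          lam i • Matrix.vecMulVec (v i) (v i)) i j)^2)
      = ∑ i : Fin n, if (i : ℕ) < m then (min (lam i) 0)^2 else (lam i)^2 := by
  have hcard : #{i : Fin n | (i : ℕ) < m} = m := by
    rw [Fin.card_filter_val_lt, min_eq_right hm]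
  have hleading : ∀ i ∈ univ.filter fun i : Fin n ↦ (i : ℕ) < m,
      ∀ j ∉ univ.filter fun j : Fin n ↦ (j : ℕ) < m, lam j ≤ lam i := fun i hi j hj ↦ by
    rw [mem_filter_univ] at hi hj
    exact hdec i j (by omega)
  simpa [hcard, strain, classicalMDS, filter_filter] using
    classical_mds_minimizes_strain_general (𝕜 := ℝ) hleading (by simpa using hortho) heig
end

section
/- Fix n ≥ 2 and for an integer k let λ_{k,n} = -(1/2) Σ_{j=0}^{n−1} ((2π/n) · min(j, n−j))² cos(2πjk/n), the eigenvalue of the doubly centered MDS matrix B of n evenly-spaced points on the geodesic circle associated to the k-th discrete Fourier mode. Then for every integer k with 1 ≤ k < n/2, λ_{k,n} > 0 if k is odd and λ_{k,n} < 0 if k is even. -/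
open Real

/-!
Write `θ = πk/n`. Over a full period, `min(j, n - j)` may be replaced by `|j|` with `j` running
through the window `-q, …, n - 1 - q`, where `q = ⌊(n - 1)/2⌋`, so that the eigenvalue becomes a
multiple of a sum of `j² cos(2jθ)`. Multiplying by `4 sin² θ` turns `cos(2jθ)` into a second
difference; two summations by parts leave `-2 ∑ cos(2jθ) = 0` and boundary terms, whence
`λ_{k,n} = -(-1)^k π² / (n sin² θ)` for even `n`, and the same times `cos θ` for odd `n`.
-/

open Finset in
theorem sum_range_min_mul_eq_sum_range_sub {R : Type*} [NonUnitalNonAssocSemiring R]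
    {a c : ℝ → R} {n q : ℕ} (ha : a.Even) (hc : c.Periodic n)
    (hqn : 2 * q + 1 ≤ n) (hnq : n ≤ 2 * q + 2) :
    ∑ j ∈ range n, a (min j (n - j) : ℕ) * c j = ∑ j ∈ range n, a (j - q) * c (j - q) := by
  obtain ⟨p, rfl⟩ : ∃ p, n = p + q := ⟨n - q, by omega⟩
  have first_half : ∀ j ∈ range p,
      a (min j (p + q - j) : ℕ) * c j = a ((q + j : ℕ) - q) * c ((q + j : ℕ) - q) := by
    intro j hj
    have hj : j < p := mem_range.mp hj
    rw [min_eq_left (by omega), Nat.cast_add, add_sub_cancel_left]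
  have second_half : ∀ j ∈ range q,
      a (min (p + j) (p + q - (p + j)) : ℕ) * c (p + j : ℕ) = a (j - q) * c (j - q) := by
    intro j hj
    have hj : j < q := mem_range.mp hj
    have shift : ((p + j : ℕ) : ℝ) = j - q + (p + q : ℕ) := by push_cast; ring
    rw [min_eq_right (by omega), Nat.add_sub_add_left, Nat.cast_sub hj.le, ← neg_sub, ha, shift, hc]
  rw [sum_range_add, sum_congr rfl first_half, sum_congr rfl second_half, add_comm,
    ← sum_range_add (fun j : ℕ ↦ a (j - q) * c (j - q)), add_comm q p]

theorem periodic_cos_two_mul_mul {θ y : ℝ} (hy : sin (y * θ) = 0) :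
    Function.Periodic (fun x ↦ cos (2 * x * θ)) y := by
  intro x
  have hcos : cos (2 * (y * θ)) = 1 := by rw [cos_two_mul, cos_sq', hy]; norm_num
  have hsin : sin (2 * (y * θ)) = 0 := by rw [sin_two_mul, hy]; ring
  have hadd : 2 * (x + y) * θ = 2 * x * θ + 2 * (y * θ) := by ring
  simp only [hadd, cos_add, hcos, hsin, mul_one, mul_zero, sub_zero]

theorem sin_mul_sum_range_cos (x θ : ℝ) (n : ℕ) :
    sin θ * ∑ j ∈ Finset.range n, cos (2 * (x + j) * θ) =
      sin (n * θ) * cos ((2 * x + n - 1) * θ) := by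
  have telescope (j : ℕ) : 2 * sin θ * cos (2 * (x + j) * θ) =
      sin ((2 * (x + (j + 1 : ℕ)) - 1) * θ) - sin ((2 * (x + j) - 1) * θ) := by
    rw [sin_sub_sin]
    push_cast
    ring_nf
  have doubled : 2 * sin θ * ∑ j ∈ Finset.range n, cos (2 * (x + j) * θ) =
      2 * (sin (n * θ) * cos ((2 * x + n - 1) * θ)) := by
    rw [Finset.mul_sum, Finset.sum_congr rfl fun j _ ↦ telescope j,
      Finset.sum_range_sub (fun j : ℕ ↦ sin ((2 * (x + j) - 1) * θ)), sin_sub_sin]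
    push_cast
    ring_nf
  linarith

theorem sum_range_cos_eq_zero {θ : ℝ} {n : ℕ} (hθ : sin θ ≠ 0) (hn : sin (n * θ) = 0) (x : ℝ) :
    ∑ j ∈ Finset.range n, cos (2 * (x + j) * θ) = 0 := by
  have h := sin_mul_sum_range_cos x θ n
  rw [hn, zero_mul] at h
  exact (mul_eq_zero.mp h).resolve_left hθ

theorem four_mul_sin_sq_mul_sum_range_sq_mul_cos (x θ : ℝ) (n : ℕ) :
    4 * sin θ ^ 2 * ∑ j ∈ Finset.range n, (x + j) ^ 2 * cos (2 * (x + j) * θ) =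
      ((x + n) ^ 2 * cos (2 * (x + n - 1) * θ) - (x + n - 1) ^ 2 * cos (2 * (x + n) * θ)) -
      (x ^ 2 * cos (2 * (x - 1) * θ) - (x - 1) ^ 2 * cos (2 * x * θ)) -
      2 * ∑ j ∈ Finset.range n, cos (2 * (x + j) * θ) := by
  let boundary (y : ℝ) : ℝ := y ^ 2 * cos (2 * (y - 1) * θ) - (y - 1) ^ 2 * cos (2 * y * θ)
  have second_difference (y : ℝ) : 4 * sin θ ^ 2 * cos (2 * y * θ) =
      2 * cos (2 * y * θ) - cos (2 * (y + 1) * θ) - cos (2 * (y - 1) * θ) := by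
    have hadd : 2 * (y + 1) * θ = 2 * y * θ + 2 * θ := by ring
    have hsub : 2 * (y - 1) * θ = 2 * y * θ - 2 * θ := by ring
    rw [hadd, hsub, cos_add, cos_sub, cos_two_mul θ, sin_sq]
    ring
  have telescope (j : ℕ) : 4 * sin θ ^ 2 * ((x + j) ^ 2 * cos (2 * (x + j) * θ)) =
      boundary (x + (j + 1 : ℕ)) - boundary (x + j) - 2 * cos (2 * (x + j) * θ) := by
    have hcancel : x + (j + 1 : ℕ) - 1 = x + j := by push_cast; ring
    have hsucc : x + (j + 1 : ℕ) = x + j + 1 := by push_cast; ring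
    simp only [boundary, hcancel]
    rw [hsucc]
    linear_combination (x + j) ^ 2 * second_difference (x + j)
  rw [Finset.mul_sum, Finset.sum_congr rfl fun j _ ↦ telescope j, Finset.sum_sub_distrib,
    Finset.sum_range_sub (fun j : ℕ ↦ boundary (x + j)), ← Finset.mul_sum]
  simp only [boundary, Nat.cast_zero, add_zero]

theorem four_mul_sin_sq_mul_sum_range_sq_mul_cos_of_sin_eq_zero {θ : ℝ} {n : ℕ}
    (hθ : sin θ ≠ 0) (hn : sin (n * θ) = 0) (x : ℝ) :
    4 * sin θ ^ 2 * ∑ j ∈ Finset.range n, (x + j) ^ 2 * cos (2 * (x + j) * θ) =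
      n * ((2 * x + n) * cos (2 * (x - 1) * θ) - (2 * x + n - 2) * cos (2 * x * θ)) := by
  have hcos : cos (2 * (x + n) * θ) = cos (2 * x * θ) := periodic_cos_two_mul_mul hn x
  have hcos_pred : cos (2 * (x + n - 1) * θ) = cos (2 * (x - 1) * θ) := by
    rw [add_sub_right_comm]
    exact periodic_cos_two_mul_mul hn (x - 1)
  rw [four_mul_sin_sq_mul_sum_range_sq_mul_cos, sum_range_cos_eq_zero hθ hn, hcos, hcos_pred]
  ring

theorem four_mul_sin_sq_mul_sum_range_min_sq_mul_cos {θ : ℝ} {n q : ℕ} (hθ : sin θ ≠ 0)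
    (hn : sin (n * θ) = 0) (hqn : 2 * q + 1 ≤ n) (hnq : n ≤ 2 * q + 2) :
    4 * sin θ ^ 2 *
        ∑ j ∈ Finset.range n, ((min j (n - j) : ℕ) : ℝ) ^ 2 * cos (2 * j * θ) =
      n * ((n - 2 * q) * cos (2 * (q + 1) * θ) - (n - 2 * q - 2) * cos (2 * q * θ)) := by
  have hsq : Function.Even fun x : ℝ ↦ x ^ 2 := fun x ↦ neg_sq x
  have window := four_mul_sin_sq_mul_sum_range_sq_mul_cos_of_sin_eq_zero hθ hn (-q)
  simp only [neg_add_eq_sub] at window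
  rw [sum_range_min_mul_eq_sum_range_sub hsq (periodic_cos_two_mul_mul hn) hqn hnq, window,
    ← cos_neg (2 * (q + 1) * θ), ← cos_neg (2 * q * θ)]
  ring_nf

theorem four_mul_sin_sq_mul_sum_range_min_sq_mul_cos_of_even {θ : ℝ} {n : ℕ} (hn : Even n)
    (hθ : sin θ ≠ 0) (hnθ : sin (n * θ) = 0) :
    4 * sin θ ^ 2 *
        ∑ j ∈ Finset.range n, ((min j (n - j) : ℕ) : ℝ) ^ 2 * cos (2 * j * θ) =
      2 * n * cos (n * θ) := by
  rcases eq_or_ne n 0 with rfl | hn0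
  · simp
  obtain ⟨q, hq⟩ : ∃ q, n = 2 * q + 2 := by
    obtain ⟨m, hm⟩ := hn
    exact ⟨m - 1, by omega⟩
  have hcast : (n : ℝ) = 2 * (q + 1) := by rw [hq]; push_cast; ring
  rw [four_mul_sin_sq_mul_sum_range_min_sq_mul_cos (q := q) hθ hnθ (by omega) (by omega), hcast]
  ring

theorem four_mul_sin_sq_mul_sum_range_min_sq_mul_cos_of_odd {θ : ℝ} {n : ℕ} (hn : Odd n)
    (hθ : sin θ ≠ 0) (hnθ : sin (n * θ) = 0) :
    4 * sin θ ^ 2 *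
        ∑ j ∈ Finset.range n, ((min j (n - j) : ℕ) : ℝ) ^ 2 * cos (2 * j * θ) =
      2 * n * cos (n * θ) * cos θ := by
  obtain ⟨q, hq⟩ := hn
  have hcast : (n : ℝ) = 2 * q + 1 := by rw [hq]; push_cast; ring
  have hsucc : 2 * (q + 1) * θ = n * θ + θ := by rw [hcast]; ring
  have hpred : 2 * q * θ = n * θ - θ := by rw [hcast]; ring
  rw [four_mul_sin_sq_mul_sum_range_min_sq_mul_cos (q := q) hθ hnθ (by omega) (by omega),
    hsucc, hpred, cos_add, cos_sub, hcast]
  ring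

theorem ne_zero_of_sin_div_ne_zero {x y : ℝ} (h : sin (x / y) ≠ 0) : y ≠ 0 := by
  rintro rfl
  simp at h

/-- The eigenvalue `λ_{k,n}` of the doubly centered MDS matrix of `n` evenly-spaced points on the
geodesic circle, belonging to the `k`-th discrete Fourier mode, for `k` not divisible by `n` (the
formula ignores that centering kills the constant mode). The distance from the `0`-th to the `j`-th
point is `(2π/n) min(j, n - j)`; the natural subtraction is exact since `j < n`. -/
noncomputable def circleMDSEigenvalue (n k : ℕ) : ℝ :=
  -(1 / 2 : ℝ) * ∑ j ∈ Finset.range n,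
    ((2 * π / n) * ((min j (n - j) : ℕ) : ℝ)) ^ 2 * cos (2 * π * j * k / n)

namespace circleMDSEigenvalue

variable {n k : ℕ}

theorem eq_mul_sum (n k : ℕ) :
    circleMDSEigenvalue n k = -(2 * π ^ 2 / n ^ 2) *
      ∑ j ∈ Finset.range n, ((min j (n - j) : ℕ) : ℝ) ^ 2 * cos (2 * j * (π * k / n)) := by
  rw [circleMDSEigenvalue, Finset.mul_sum, Finset.mul_sum]
  refine Finset.sum_congr rfl fun j _ ↦ ?_
  have hangle : 2 * π * j * k / n = 2 * j * (π * k / n) := by ring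
  rw [hangle]
  ring

theorem eq_of_even (hn : Even n) (hsin : sin (π * k / n) ≠ 0) :
    circleMDSEigenvalue n k = -((-1) ^ k * (π ^ 2 / (n * sin (π * k / n) ^ 2))) := by
  have hn0 : (n : ℝ) ≠ 0 := ne_zero_of_sin_div_ne_zero hsin
  have hangle : n * (π * k / n) = k * π := by rw [mul_div_cancel₀ _ hn0, mul_comm]
  have hsum := four_mul_sin_sq_mul_sum_range_min_sq_mul_cos_of_even hn hsin
    (by rw [hangle, sin_nat_mul_pi])
  rw [hangle, cos_nat_mul_pi] at hsum
  rw [eq_mul_sum, eq_div_of_mul_eq (by positivity) ((mul_comm _ _).trans hsum)]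
  field

theorem eq_of_odd (hn : Odd n) (hsin : sin (π * k / n) ≠ 0) :
    circleMDSEigenvalue n k =
      -((-1) ^ k * (π ^ 2 / (n * sin (π * k / n) ^ 2) * cos (π * k / n))) := by
  have hn0 : (n : ℝ) ≠ 0 := ne_zero_of_sin_div_ne_zero hsin
  have hangle : n * (π * k / n) = k * π := by rw [mul_div_cancel₀ _ hn0, mul_comm]
  have hsum := four_mul_sin_sq_mul_sum_range_min_sq_mul_cos_of_odd hn hsin
    (by rw [hangle, sin_nat_mul_pi])
  rw [hangle, cos_nat_mul_pi] at hsum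
  rw [eq_mul_sum, eq_div_of_mul_eq (by positivity) ((mul_comm _ _).trans hsum)]
  field

theorem neg_one_pow_mul_neg (hk : 1 ≤ k) (hkn : 2 * k ≤ n) :
    (-1) ^ k * circleMDSEigenvalue n k < 0 := by
  have hk0 : (0 : ℝ) < k := by exact_mod_cast hk
  have hn0 : (0 : ℝ) < n := by exact_mod_cast (by omega : 0 < n)
  have hθ_pos : 0 < π * k / n := div_pos (mul_pos pi_pos hk0) hn0
  have hsin : 0 < sin (π * k / n) := by
    refine sin_pos_of_pos_of_lt_pi hθ_pos ?_
    rw [div_lt_iff₀ hn0]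
    gcongr
    omega
  have hsign : (-1 : ℝ) ^ k * (-1) ^ k = 1 := pow_mul_pow_eq_one k (by norm_num)
  rcases n.even_or_odd with hn | hn
  · rw [eq_of_even hn hsin.ne', mul_neg, ← mul_assoc, hsign, one_mul, neg_lt_zero]
    positivity
  · have hkn_lt : 2 * (k : ℝ) < n := by
      have hne : 2 * k ≠ n := by grind
      exact_mod_cast hkn.lt_of_ne hne
    have hcos : 0 < cos (π * k / n) := by
      refine cos_pos_of_mem_Ioo ⟨by linarith [pi_pos], ?_⟩
      rw [div_lt_div_iff₀ hn0 two_pos, mul_assoc, mul_comm (k : ℝ)]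
      gcongr
    rw [eq_of_odd hn hsin.ne', mul_neg, ← mul_assoc, hsign, one_mul, neg_lt_zero]
    positivity

end circleMDSEigenvalue

theorem circle_mds_eigenvalue_signs_general (n k : ℕ) (hk : 1 ≤ k) (hkn : 2 * k ≤ n) :
    (Odd k → 0 < circleMDSEigenvalue n k) ∧ (Even k → circleMDSEigenvalue n k < 0) := by
  have hneg := circleMDSEigenvalue.neg_one_pow_mul_neg hk hkn
  constructor
  · intro hodd
    simpa [hodd.neg_one_pow] using hneg
  · intro heven
    simpa [heven.neg_one_pow] using hneg

/-- **Proposition (signs of the circle MDS eigenvalues).**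
For `n` evenly-spaced points on the geodesic circle, the eigenvalue
`λ_{k,n} = -(1/2) ∑_{j=0}^{n−1} ((2π/n) min(j, n−j))² cos(2πjk/n)` of the
doubly centered MDS matrix associated to the `k`-th discrete Fourier mode is
positive for odd `k` and negative for even `k`, for all `1 ≤ k < n/2`. -/
theorem circle_mds_eigenvalue_signs
    (n : ℕ) (hn : 2 ≤ n) (k : ℕ) (hk1 : 1 ≤ k) (hk2 : 2 * k < n) :
    (Odd k → 0 < -(1/2 : ℝ) * ∑ j ∈ Finset.range n,
      ((2 * π / n) * ((min j (n - j) : ℕ) : ℝ))^2 * Real.cos (2 * π * j * k / n)) ∧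
    (Even k → -(1/2 : ℝ) * ∑ j ∈ Finset.range n,
      ((2 * π / n) * ((min j (n - j) : ℕ) : ℝ))^2 * Real.cos (2 * π * j * k / n) < 0) :=
  circle_mds_eigenvalue_signs_general n k hk1 hk2.le
end

section
/- For every fixed integer k ≥ 1, the normalized discrete Fourier eigenvalues of the MDS matrices of n evenly-spaced points on the geodesic circle converge as n → ∞: lim_{n→∞} (1/n) Σ_{j=0}^{n−1} (-(1/2)) ((2π/n) · min(j, n−j))² cos(2πjk/n) = (−1)^{k+1} / k². In particular the limit is 1/k² for odd k and −1/k² for even k. -/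
open Real Filter

/-!
The geodesic distance from `0` to `θ` on the circle of length `2π` is `‖(θ : AddCircle (2π))‖`, so
`-4π · λ_{k,n} / n` is the left Riemann sum of `‖θ‖² cos (kθ)` over `[0, 2π]` with mesh `2π / n`.
Since `‖θ‖ = |θ|` on `[-π, π]`, periodicity identifies the limiting integral with
`∫_{-π}^{π} θ² cos (kθ) dθ = 4π (-1)^k / k²`.
-/

section RiemannSum

open MeasureTheory Set
open scoped Interval Topology

variable {E : Type*} [NormedAddCommGroup E] [NormedSpace ℝ E] {f : ℝ → E} {a b : ℝ}

/-- The Riemann sum of `f` over `[a, b]` for the partition into `n` intervals of equal length, with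
`f` evaluated at the endpoint of each interval nearer to `a`. As for the interval integral, `b < a`
is allowed. -/
noncomputable def leftRiemannSum (f : ℝ → E) (a b : ℝ) (n : ℕ) : E :=
  ((b - a) / n) • ∑ j ∈ Finset.range n, f (a + j * ((b - a) / n))

lemma add_mul_sub_div_mem_uIcc (a b : ℝ) {j n : ℕ} (hjn : j ≤ n) :
    a + j * ((b - a) / n) ∈ [[a, b]] := by
  rw [← segment_eq_uIcc, segment_eq_image']
  refine ⟨j / n, ⟨by positivity, div_le_one_of_le₀ (mod_cast hjn) (by positivity)⟩, ?_⟩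
  simp only [smul_eq_mul]
  ring

variable [CompleteSpace E]

lemma norm_sub_smul_left_sub_integral_le {C : ℝ} (hf : IntervalIntegrable f volume a b)
    (hC : ∀ x ∈ Ι a b, ‖f a - f x‖ ≤ C) :
    ‖(b - a) • f a - ∫ x in a..b, f x‖ ≤ C * |b - a| := by
  rw [← intervalIntegral.integral_const, ← intervalIntegral.integral_sub (by simp) hf]
  exact intervalIntegral.norm_integral_le_of_norm_le_const hC

lemma norm_leftRiemannSum_sub_integral_le {ε : ℝ} {n : ℕ} (hn : n ≠ 0)
    (hf : ContinuousOn f [[a, b]])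
    (hε : ∀ x ∈ [[a, b]], ∀ y ∈ [[a, b]], |x - y| ≤ |b - a| / n → ‖f x - f y‖ ≤ ε) :
    ‖leftRiemannSum f a b n - ∫ x in a..b, f x‖ ≤ ε * |b - a| := by
  have hn' : (n : ℝ) ≠ 0 := mod_cast hn
  set h := (b - a) / n with hh
  let node (j : ℕ) : ℝ := a + j * h
  have node_mem {j : ℕ} (hj : j ≤ n) : node j ∈ [[a, b]] := add_mul_sub_div_mem_uIcc a b hj
  have node_step (j : ℕ) : node (j + 1) - node j = h := by simp only [node]; push_cast; ring
  have cell_subset {j : ℕ} (hj : j < n) : [[node j, node (j + 1)]] ⊆ [[a, b]] :=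
    uIcc_subset_uIcc (node_mem hj.le) (node_mem hj)
  have cell_integrable (j : ℕ) (hj : j < n) :
      IntervalIntegrable f volume (node j) (node (j + 1)) :=
    (hf.mono (cell_subset hj)).intervalIntegrable
  have cell_error (j : ℕ) (hj : j ∈ Finset.range n) :
      ‖h • f (node j) - ∫ x in node j..node (j + 1), f x‖ ≤ ε * |h| := by
    rw [Finset.mem_range] at hj
    rw [← node_step j]
    refine norm_sub_smul_left_sub_integral_le (cell_integrable j hj) fun x hx ↦ ?_
    have hx' := uIoc_subset_uIcc hx
    refine hε _ (node_mem hj.le) x (cell_subset hj hx') ?_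
    calc |node j - x| = |x - node j| := abs_sub_comm _ _
      _ ≤ |node (j + 1) - node j| := abs_sub_left_of_mem_uIcc hx'
      _ = |b - a| / n := by rw [node_step, hh, abs_div, Nat.abs_cast]
  have integral_eq_sum :
      ∫ x in a..b, f x = ∑ j ∈ Finset.range n, ∫ x in node j..node (j + 1), f x := by
    rw [intervalIntegral.sum_integral_adjacent_intervals cell_integrable]
    simp [node, hh, mul_div_cancel₀ _ hn']
  calc ‖leftRiemannSum f a b n - ∫ x in a..b, f x‖
      = ‖∑ j ∈ Finset.range n, (h • f (node j) - ∫ x in node j..node (j + 1), f x)‖ := by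
        rw [integral_eq_sum, leftRiemannSum, Finset.smul_sum, Finset.sum_sub_distrib]
    _ ≤ ∑ _j ∈ Finset.range n, ε * |h| := norm_sum_le_of_le _ cell_error
    _ = ε * |b - a| := by
        rw [Finset.sum_const, Finset.card_range, nsmul_eq_mul, hh, abs_div, Nat.abs_cast]
        field_simp

theorem tendsto_leftRiemannSum (hf : ContinuousOn f [[a, b]]) :
    Tendsto (leftRiemannSum f a b) atTop (𝓝 (∫ x in a..b, f x)) := by
  refine Metric.tendsto_nhds.2 fun ε hε ↦ ?_
  obtain ⟨C, hC, hCε⟩ := exists_pos_mul_lt hε |b - a|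
  obtain ⟨δ, hδ, hosc⟩ := Metric.uniformContinuousOn_iff_le.1
    (isCompact_uIcc.uniformContinuousOn_of_continuous hf) C hC
  have hmesh : ∀ᶠ n : ℕ in atTop, |b - a| / n < δ :=
    (tendsto_const_div_atTop_nhds_zero_nat _).eventually_lt_const hδ
  filter_upwards [hmesh, eventually_ne_atTop 0] with n hnδ hn
  simp only [dist_eq_norm, Real.norm_eq_abs] at hosc ⊢
  calc ‖leftRiemannSum f a b n - ∫ x in a..b, f x‖
      ≤ C * |b - a| := norm_leftRiemannSum_sub_integral_le hn hf
        fun x hx y hy hxy ↦ hosc x hx y hy (hxy.trans hnδ.le)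
    _ < ε := by rwa [mul_comm]

end RiemannSum

lemma norm_addCircle_natCast_mul_div {p : ℝ} (hp : 0 < p) {j n : ℕ} (hj : j < n) :
    ‖((j * (p / n) : ℝ) : AddCircle p)‖ = p / n * (min j (n - j) : ℕ) := by
  have := Fact.mk hp
  rw [← mul_comm_div, AddCircle.norm_div_natCast, Nat.mod_eq_of_lt hj]
  ring

lemma integral_comp_norm_addCircle_mul {p : ℝ} (φ : ℝ → ℝ) {g : ℝ → ℝ}
    (hg : Function.Periodic g p) :
    ∫ θ in 0..p, φ ‖(θ : AddCircle p)‖ * g θ = ∫ θ in -(p / 2)..p / 2, φ |θ| * g θ := by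
  rcases eq_or_ne p 0 with rfl | hp
  · simp
  have hper : Function.Periodic (fun θ : ℝ ↦ φ ‖(θ : AddCircle p)‖ * g θ) p := fun θ ↦ by
    simp only [AddCircle.coe_add_period, hg θ]
  have hshift := hper.intervalIntegral_add_eq 0 (-(p / 2))
  rw [zero_add, neg_add_eq_sub, sub_half] at hshift
  rw [hshift]
  refine intervalIntegral.integral_congr fun θ hθ ↦ ?_
  have hθ' : |θ| ≤ |p| / 2 := by
    rw [abs_le]
    rcases Set.mem_uIcc.1 hθ with h | h <;>
      constructor <;> linarith [le_abs_self p, neg_le_abs p]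
  simp only [(AddCircle.norm_coe_eq_abs_iff p hp).2 hθ']

lemma hasDerivAt_antideriv_sq_mul_cos {c : ℝ} (hc : c ≠ 0) (x : ℝ) :
    HasDerivAt
      (fun x ↦ x ^ 2 * sin (c * x) / c + 2 * x * cos (c * x) / c ^ 2 - 2 * sin (c * x) / c ^ 3)
      (x ^ 2 * cos (c * x)) x := by
  have hlin : HasDerivAt (fun x ↦ c * x) c x := by simpa using (hasDerivAt_id x).const_mul c
  have htwo : HasDerivAt (fun x : ℝ ↦ 2 * x) 2 x := by simpa using (hasDerivAt_id x).const_mul 2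
  refine (((((hasDerivAt_pow 2 x).mul hlin.sin).div_const c).add
    ((htwo.mul hlin.cos).div_const (c ^ 2))).sub
    ((hlin.sin.const_mul 2).div_const (c ^ 3))).congr_deriv ?_
  field_simp
  push_cast
  ring

lemma integral_sq_mul_cos_nat_mul {k : ℕ} (hk : k ≠ 0) :
    ∫ θ in -π..π, θ ^ 2 * cos (k * θ) = 4 * π * (-1) ^ k / k ^ 2 := by
  have hk' : (k : ℝ) ≠ 0 := mod_cast hk
  rw [intervalIntegral.integral_eq_sub_of_hasDerivAt
    (fun θ _ ↦ hasDerivAt_antideriv_sq_mul_cos hk' θ)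
    (Continuous.intervalIntegrable (by fun_prop) _ _)]
  simp only [mul_neg, sin_neg, cos_neg, sin_nat_mul_pi, cos_nat_mul_pi]
  ring

lemma integral_norm_addCircle_sq_mul_cos {k : ℕ} (hk : k ≠ 0) :
    ∫ θ in 0..2 * π, ‖(θ : AddCircle (2 * π))‖ ^ 2 * cos (k * θ) = 4 * π * (-1) ^ k / k ^ 2 := by
  have hper : Function.Periodic (fun θ : ℝ ↦ cos (k * θ)) (2 * π) := fun θ ↦ by
    simp only [mul_add, cos_add_nat_mul_two_pi]
  rw [integral_comp_norm_addCircle_mul (· ^ 2) hper, mul_div_cancel_left₀ π two_ne_zero]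
  simp only [sq_abs, integral_sq_mul_cos_nat_mul hk]

lemma normalized_circle_mds_eigenvalue_eq_leftRiemannSum (k n : ℕ) :
    (1 / (n : ℝ)) * ∑ j ∈ Finset.range n,
        -(1 / 2) * ((2 * π / n) * (min j (n - j) : ℕ)) ^ 2 * cos (2 * π * j * k / n) =
      -(1 / (4 * π)) *
        leftRiemannSum (fun θ ↦ ‖(θ : AddCircle (2 * π))‖ ^ 2 * cos (k * θ)) 0 (2 * π) n := by
  simp only [leftRiemannSum, sub_zero, zero_add, smul_eq_mul, Finset.mul_sum]
  refine Finset.sum_congr rfl fun j hj ↦ ?_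
  rw [norm_addCircle_natCast_mul_div two_pi_pos (Finset.mem_range.1 hj),
    show k * (j * (2 * π / n)) = 2 * π * j * k / n by ring]
  field_simp
  ring

/-- **Proposition (limit of the normalized circle MDS eigenvalues).**
For fixed `k ≥ 1`, the normalized eigenvalue `λ_{k,n}/n` of the doubly
centered MDS matrix of `n` evenly-spaced points on the geodesic circle
converges, as `n → ∞`, to `(−1)^{k+1}/k²`. -/
theorem circle_mds_eigenvalue_limit (k : ℕ) (hk : 1 ≤ k) :
    Tendsto
      (fun n : ℕ => (1 / (n : ℝ)) * ∑ j ∈ Finset.range n,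
        (-(1/2 : ℝ)) * ((2 * π / n) * ((min j (n - j) : ℕ) : ℝ))^2
          * Real.cos (2 * π * j * k / n))
      atTop (nhds ((-1 : ℝ)^(k + 1) / (k : ℝ)^2)) := by
  have hcont : Continuous fun θ : ℝ ↦ ‖(θ : AddCircle (2 * π))‖ ^ 2 * cos (k * θ) := by
    have : Continuous ((↑) : ℝ → AddCircle (2 * π)) := AddCircle.continuous_mk' _
    fun_prop
  have hlim := (tendsto_leftRiemannSum (hcont.continuousOn (s := Set.uIcc 0 (2 * π)))).const_mul
    (-(1 / (4 * π)))
  rw [integral_norm_addCircle_sq_mul_cos (Nat.one_le_iff_ne_zero.1 hk)] at hlim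
  simp only [normalized_circle_mds_eigenvalue_eq_leftRiemannSum]
  convert! hlim using 2
  field_simp
  ring
end

section
/- For every nonzero integer k and every real x, -(1/2) · (1/(2π)) · ∫_{x−π}^{x+π} (y − x)² e^{iky} dy = ((−1)^{k+1} / k²) · e^{ikx}. Consequently, the complex exponentials φ_k(x) = e^{ikx} are eigenfunctions, with eigenvalues λ_k = (−1)^{k+1}/k², of the integral operator on the circle with kernel -(1/2) d(x,y)² where d is the geodesic distance and the measure is the uniform probability measure dθ/(2π). -/
open Real Complex

/-! The operator is a convolution, so substituting `y = x + t` splits off the factor `e^{ikx}` and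
leaves as eigenvalue the Fourier integral of `t²` over `[-π, π]`. Two integrations by parts evaluate
it: since `e^{ikt}` takes the same value `(-1)^k` at `±π`, the boundary terms of even powers of `t`
cancel and only the one linear in `t` survives. -/

theorem integral_comp_sub_mul_cexp (f : ℝ → ℂ) (c : ℂ) (x a b : ℝ) :
    ∫ y in (x + a)..(x + b), f (y - x) * cexp (c * y) =
      cexp (c * x) * ∫ t in a..b, f t * cexp (c * t) := by
  calc ∫ y in (x + a)..(x + b), f (y - x) * cexp (c * y)
      = ∫ t in a..b, f (x + t - x) * cexp (c * (x + t : ℝ)) :=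
        (intervalIntegral.integral_comp_add_left (fun y ↦ f (y - x) * cexp (c * y)) x).symm
    _ = ∫ t in a..b, cexp (c * x) * (f t * cexp (c * t)) := by
        refine intervalIntegral.integral_congr fun t _ ↦ ?_
        simp only [add_sub_cancel_left, ofReal_add, mul_add, Complex.exp_add]
        ring
    _ = cexp (c * x) * ∫ t in a..b, f t * cexp (c * t) :=
        intervalIntegral.integral_const_mul _ _

theorem integral_pow_succ_mul_cexp {c : ℂ} (hc : c ≠ 0) (n : ℕ) (a b : ℝ) :
    ∫ t in a..b, (t : ℂ) ^ (n + 1) * cexp (c * t) =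
      ((b : ℂ) ^ (n + 1) * cexp (c * b) - (a : ℂ) ^ (n + 1) * cexp (c * a)) / c -
        (n + 1) / c * ∫ t in a..b, (t : ℂ) ^ n * cexp (c * t) := by
  have hpow (t : ℝ) :
      HasDerivAt (fun t : ℝ ↦ (t : ℂ) ^ (n + 1)) ((n + 1) * (t : ℂ) ^ n) t := by
    simpa using (hasDerivAt_pow (n + 1) (t : ℂ)).comp_ofReal
  have hexp_div (t : ℝ) :
      HasDerivAt (fun t : ℝ ↦ cexp (c * t) / c) (cexp (c * t)) t := by
    simpa [hc] using (((hasDerivAt_id (t : ℂ)).const_mul c).cexp.div_const c).comp_ofReal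
  rw [intervalIntegral.integral_mul_deriv_eq_deriv_mul (fun t _ ↦ hpow t)
      (fun t _ ↦ hexp_div t) (Continuous.intervalIntegrable (by fun_prop) _ _)
      (Continuous.intervalIntegrable (by fun_prop) _ _), ← intervalIntegral.integral_const_mul]
  congr 1
  · ring
  · exact intervalIntegral.integral_congr fun t _ ↦ by ring

theorem integral_sq_mul_cexp_of_cexp_neg_eq {c : ℂ} (hc : c ≠ 0) {a : ℝ}
    (h : cexp (-(c * a)) = cexp (c * a)) :
    ∫ t in (-a)..a, (t : ℂ) ^ 2 * cexp (c * t) = -(4 * a * cexp (c * a) / c ^ 2) := by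
  have hintegral_cexp : ∫ t in (-a)..a, (t : ℂ) ^ 0 * cexp (c * t) = 0 := by
    simp [integral_exp_mul_complex hc, h]
  rw [integral_pow_succ_mul_cexp hc 1, integral_pow_succ_mul_cexp hc 0, hintegral_cexp]
  push_cast
  rw [mul_neg, h]
  ring

theorem cexp_int_mul_I_mul_pi (k : ℤ) : cexp (k * I * π) = (-1) ^ k := by
  rw [mul_assoc, mul_comm I, Complex.exp_int_mul, exp_pi_mul_I]

theorem integral_sq_mul_cexp_int_mul_I {k : ℤ} (hk : k ≠ 0) :
    ∫ t in (-π)..π, (t : ℂ) ^ 2 * cexp (k * I * t) = 4 * π * (-1) ^ k / k ^ 2 := by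
  have hc : (k : ℂ) * I ≠ 0 := mul_ne_zero (Int.cast_ne_zero.mpr hk) I_ne_zero
  have hendpoints : cexp (-(k * I * π)) = cexp (k * I * π) := by
    rw [Complex.exp_neg, cexp_int_mul_I_mul_pi, ← inv_zpow, inv_neg_one]
  rw [integral_sq_mul_cexp_of_cexp_neg_eq hc hendpoints, cexp_int_mul_I_mul_pi, mul_pow, I_sq,
    mul_neg_one, div_neg, neg_neg]

/-- **Lemma (eigenfunctions of the MDS operator of the geodesic circle).**
For every nonzero integer `k` and real `x`,
`-(1/2) (1/(2π)) ∫_{x−π}^{x+π} (y−x)² e^{iky} dy = ((−1)^{k+1}/k²) e^{ikx}`;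
i.e. the complex exponentials `e^{ikx}` are eigenfunctions, with eigenvalues
`(−1)^{k+1}/k²`, of the integral operator on the circle with kernel
`-(1/2) d(x,y)²` (geodesic distance, uniform measure `dθ/(2π)`). -/
theorem circle_mds_eigenfunctions (k : ℤ) (hk : k ≠ 0) (x : ℝ) :
    -(1/2 : ℂ) * (1 / (2 * (π : ℂ))) *
        ∫ y in (x - π)..(x + π), (((y - x : ℝ) : ℂ))^2 * Complex.exp ((k : ℂ) * y * Complex.I)
      = ((-1 : ℂ)^(k + 1) / (k : ℂ)^2) * Complex.exp ((k : ℂ) * x * Complex.I) := by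
  have hpi : (π : ℂ) ≠ 0 := ofReal_ne_zero.mpr pi_ne_zero
  simp only [mul_right_comm (k : ℂ) _ I]
  rw [sub_eq_add_neg, integral_comp_sub_mul_cexp (fun t ↦ (t : ℂ) ^ 2),
    integral_sq_mul_cexp_int_mul_I hk, zpow_add_one₀ (neg_ne_zero.mpr one_ne_zero)]
  field_simp
  ring
end
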